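/- arXiv:2309.03515 — 6 statements merged into one kernel-verified Lean document; each statement's English description precedes it below -/
import Mathlib

section
/- Let n ≥ 2, a ∈ 𝔹ⁿ \ {0}, and let A : ℝⁿ → ℝⁿ be a linear isometry (orthogonal transformation). Let f = A ∘ σ_a (which is a Möbius transformation of 𝔹ⁿ onto 𝔹ⁿ with f(a) = 0). Then for all x, y ∈ 𝔹ⁿ and all c > 0: (1/(1+|a|))·h_{𝔹ⁿ,c}(x, y) ≤ h_{𝔹ⁿ,c}(f(x), f(y)) ≤ (1+|a|)·h_{𝔹ⁿ,c}(x, y). -/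
noncomputable section

open Real Filter

/-- The hyperbolic-type metric `h_{𝔹ⁿ,c}` on the unit ball. -/
def hB {n : ℕ} (c : ℝ) (x y : EuclideanSpace ℝ (Fin n)) : ℝ :=
  Real.log (1 + c * ‖x - y‖ / Real.sqrt ((1 - ‖x‖) * (1 - ‖y‖)))

/-- The n-th (last) coordinate of a point of `ℝⁿ`. -/
def lastCoord {n : ℕ} (x : EuclideanSpace ℝ (Fin n)) : ℝ :=
  if h : 0 < n then x ⟨n - 1, Nat.sub_lt h one_pos⟩ else 0

/-- The hyperbolic-type metric `h_{ℍⁿ,c}` on the upper half space. -/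
def hH {n : ℕ} (c : ℝ) (x y : EuclideanSpace ℝ (Fin n)) : ℝ :=
  Real.log (1 + c * ‖x - y‖ / Real.sqrt (lastCoord x * lastCoord y))

/-- The hyperbolic-type metric `h_{𝔹ⁿ\{p},c}` on the punctured unit ball. -/
def hP {n : ℕ} (c : ℝ) (p x y : EuclideanSpace ℝ (Fin n)) : ℝ :=
  Real.log (1 + c * ‖x - y‖ /
    Real.sqrt (min ‖x - p‖ (1 - ‖x‖) * min ‖y - p‖ (1 - ‖y‖)))

/-- The inversion `σ_a` in the sphere `S^{n-1}(a*, r)`, `a* = a/|a|²`, `r² = 1/|a|² - 1`. -/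
def sigmaInv {n : ℕ} (a x : EuclideanSpace ℝ (Fin n)) : EuclideanSpace ℝ (Fin n) :=
  (‖a‖ ^ 2)⁻¹ • a +
    (((‖a‖ ^ 2)⁻¹ - 1) / ‖x - (‖a‖ ^ 2)⁻¹ • a‖ ^ 2) • (x - (‖a‖ ^ 2)⁻¹ • a)

/-- The last standard basis vector `eₙ` of `ℝⁿ`. -/
def eLast (n : ℕ) : EuclideanSpace ℝ (Fin n) :=
  if h : 0 < n then EuclideanSpace.single ⟨n - 1, Nat.sub_lt h one_pos⟩ 1 else 0

/-- The first standard basis vector `e₁` of `ℝⁿ`. -/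
def eFirst (n : ℕ) : EuclideanSpace ℝ (Fin n) :=
  if h : 0 < n then EuclideanSpace.single ⟨0, h⟩ 1 else 0

/-- The inversion `σ` in the sphere `S^{n-1}(-eₙ, √2)`, mapping `𝔹ⁿ` onto `ℍⁿ`. -/
def sigmaBH {n : ℕ} (x : EuclideanSpace ℝ (Fin n)) : EuclideanSpace ℝ (Fin n) :=
  -eLast n + (2 / ‖x + eLast n‖ ^ 2) • (x + eLast n)

/-!
The number `‖x - y‖ / √((1 - ‖x‖²)(1 - ‖y‖²))` is `sinh (ρ(x, y) / 2)`, where `ρ` is the hyperbolic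
metric of the ball, so it is invariant under inversion in a sphere orthogonal to the unit sphere.
Up to the constant `c`, the argument of the logarithm in the metric `h` exceeds `1` by this
invariant times `√((1 + ‖x‖)(1 + ‖y‖))`. The hyperbolic triangle inequality through the origin gives
`‖σ x‖ ≤ (‖x‖ + ‖a‖) / (1 + ‖x‖ ‖a‖)`, hence `1 + ‖σ x‖ ≤ (1 + ‖a‖)(1 + ‖x‖)`, and Bernoulli's
inequality takes the factor `1 + ‖a‖` out of the logarithm. As `σ` is an involution, the lower bound
is the upper bound at `σ x`, `σ y`.
-/

open EuclideanGeometry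

lemma log_one_add_mul_le {K t : ℝ} (hK : 1 ≤ K) (ht : 0 ≤ t) :
    log (1 + K * t) ≤ K * log (1 + t) := by
  rw [← log_rpow (by positivity)]
  exact log_le_log (by positivity) (one_add_mul_self_le_rpow_one_add (by linarith) hK)

section Ball

variable {E F : Type*} [SeminormedAddCommGroup E] [SeminormedAddCommGroup F]

/-- The hyperbolic-type metric `h_{𝔹,c}` on the unit ball `𝔹` of a seminormed group; it extends `hB`
beyond `ℝⁿ`. -/
def ballLogDist (c : ℝ) (x y : E) : ℝ :=
  log (1 + c * ‖x - y‖ / √((1 - ‖x‖) * (1 - ‖y‖)))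

/-- The quantity `sinh (ρ(x, y) / 2)`, where `ρ` is the hyperbolic metric of curvature `-1` on the
unit ball. It is defined by its closed form, so that `ρ` itself is not needed, and is meaningful
only for points of the open unit ball. -/
def sinhHalfDist (x y : E) : ℝ :=
  ‖x - y‖ / √((1 - ‖x‖ ^ 2) * (1 - ‖y‖ ^ 2))

lemma sinhHalfDist_nonneg (x y : E) : 0 ≤ sinhHalfDist x y := by
  unfold sinhHalfDist
  positivity

lemma one_sub_norm_sq_pos {x : E} (hx : ‖x‖ < 1) : 0 < 1 - ‖x‖ ^ 2 :=
  sub_pos.2 (pow_lt_one₀ (norm_nonneg x) hx two_ne_zero)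

lemma sinhHalfDist_sq {x y : E} (hx : ‖x‖ < 1) (hy : ‖y‖ < 1) :
    sinhHalfDist x y ^ 2 = ‖x - y‖ ^ 2 / ((1 - ‖x‖ ^ 2) * (1 - ‖y‖ ^ 2)) := by
  rw [sinhHalfDist, div_pow,
    sq_sqrt (mul_pos (one_sub_norm_sq_pos hx) (one_sub_norm_sq_pos hy)).le]

lemma ballLogDist_map [NormedSpace ℝ E] [NormedSpace ℝ F] (A : E →ₗᵢ[ℝ] F) (c : ℝ) (x y : E) :
    ballLogDist c (A x) (A y) = ballLogDist c x y := by
  simp only [ballLogDist, ← map_sub, A.norm_map]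

lemma ballLogDist_eq_log_sinhHalfDist (c : ℝ) (x y : E) :
    ballLogDist c x y = log (1 + c * (√((1 + ‖x‖) * (1 + ‖y‖)) * sinhHalfDist x y)) := by
  have hfactor : (1 - ‖x‖ ^ 2) * (1 - ‖y‖ ^ 2) =
      (1 + ‖x‖) * (1 + ‖y‖) * ((1 - ‖x‖) * (1 - ‖y‖)) := by ring
  have hpos : 0 < (1 + ‖x‖) * (1 + ‖y‖) := by positivity
  rw [ballLogDist, sinhHalfDist, hfactor, sqrt_mul hpos.le, ← mul_div_assoc,
    mul_div_mul_left _ _ (sqrt_pos.2 hpos).ne', mul_div_assoc]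

lemma ballLogDist_le_mul_of_sinhHalfDist_eq {c K : ℝ} (hc : 0 ≤ c) (hK : 1 ≤ K)
    {x y : E} {x' y' : F} (hxx' : 1 + ‖x'‖ ≤ K * (1 + ‖x‖)) (hyy' : 1 + ‖y'‖ ≤ K * (1 + ‖y‖))
    (h : sinhHalfDist x' y' = sinhHalfDist x y) :
    ballLogDist c x' y' ≤ K * ballLogDist c x y := by
  have hsinh := sinhHalfDist_nonneg x y
  have hsqrt : √((1 + ‖x'‖) * (1 + ‖y'‖)) ≤ K * √((1 + ‖x‖) * (1 + ‖y‖)) :=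
    calc √((1 + ‖x'‖) * (1 + ‖y'‖)) ≤ √(K * (1 + ‖x‖) * (K * (1 + ‖y‖))) := by gcongr
      _ = √(K ^ 2 * ((1 + ‖x‖) * (1 + ‖y‖))) := by ring_nf
      _ = K * √((1 + ‖x‖) * (1 + ‖y‖)) := by
        rw [sqrt_mul (sq_nonneg K), sqrt_sq (zero_le_one.trans hK)]
  rw [ballLogDist_eq_log_sinhHalfDist, ballLogDist_eq_log_sinhHalfDist, h]
  set t := c * (√((1 + ‖x‖) * (1 + ‖y‖)) * sinhHalfDist x y) with ht
  calc log (1 + c * (√((1 + ‖x'‖) * (1 + ‖y'‖)) * sinhHalfDist x y))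
      ≤ log (1 + c * (K * √((1 + ‖x‖) * (1 + ‖y‖)) * sinhHalfDist x y)) := by gcongr
    _ = log (1 + K * t) := by rw [ht]; ring_nf
    _ ≤ K * log (1 + t) := log_one_add_mul_le hK (by positivity)

/-- This is `ρ(x, y) ≤ ρ(x, 0) + ρ(0, y)` for the hyperbolic metric `ρ`: the hypothesis `h` says
`‖z‖ = tanh (ρ(x, y) / 2)`, and `‖x‖ = tanh (ρ(x, 0) / 2)`, `‖y‖ = tanh (ρ(0, y) / 2)`. -/
lemma norm_mul_one_add_le_of_sinhHalfDist_eq {x y : E} {z : F}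
    (hx : ‖x‖ < 1) (hy : ‖y‖ < 1) (hz : ‖z‖ < 1) (h : sinhHalfDist z 0 = sinhHalfDist x y) :
    ‖z‖ * (1 + ‖x‖ * ‖y‖) ≤ ‖x‖ + ‖y‖ := by
  have hx2 := one_sub_norm_sq_pos hx
  have hy2 := one_sub_norm_sq_pos hy
  have hz2 := one_sub_norm_sq_pos hz
  have hsq : ‖z‖ ^ 2 * ((1 - ‖x‖ ^ 2) * (1 - ‖y‖ ^ 2)) = ‖x - y‖ ^ 2 * (1 - ‖z‖ ^ 2) := by
    have := congrArg (· ^ 2) h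
    simpa [sinhHalfDist_sq, hx, hy, hz, div_eq_div_iff, hx2.ne', hy2.ne', hz2.ne'] using this
  refine le_of_sq_le_sq ?_ (by positivity)
  calc (‖z‖ * (1 + ‖x‖ * ‖y‖)) ^ 2
      = ‖z‖ ^ 2 * ((1 - ‖x‖ ^ 2) * (1 - ‖y‖ ^ 2)) + ‖z‖ ^ 2 * (‖x‖ + ‖y‖) ^ 2 := by ring
    _ = ‖x - y‖ ^ 2 * (1 - ‖z‖ ^ 2) + ‖z‖ ^ 2 * (‖x‖ + ‖y‖) ^ 2 := by rw [hsq]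
    _ ≤ (‖x‖ + ‖y‖) ^ 2 * (1 - ‖z‖ ^ 2) + ‖z‖ ^ 2 * (‖x‖ + ‖y‖) ^ 2 := by
      gcongr
      exact norm_sub_le x y
    _ = (‖x‖ + ‖y‖) ^ 2 := by ring

end Ball

section Inversion

variable {E : Type*} [NormedAddCommGroup E] {p x y : E} {R : ℝ}

-- `‖p‖ ^ 2 = 1 + R ^ 2` says that the sphere `S(p, R)` is orthogonal to the unit sphere.
lemma ne_center_of_norm_lt_one (hp : ‖p‖ ^ 2 = 1 + R ^ 2) (hx : ‖x‖ < 1) : x ≠ p := by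
  rintro rfl
  linarith [one_sub_norm_sq_pos hx, sq_nonneg R]

variable [InnerProductSpace ℝ E]

lemma one_sub_norm_inversion_sq (hp : ‖p‖ ^ 2 = 1 + R ^ 2) (hx : x ≠ p) :
    1 - ‖inversion p R x‖ ^ 2 = (R / dist x p) ^ 2 * (1 - ‖x‖ ^ 2) := by
  have hxp : ‖x - p‖ ≠ 0 := norm_ne_zero_iff.2 (sub_ne_zero.2 hx)
  have hx_sq : ‖x‖ ^ 2 = ‖x - p‖ ^ 2 + 2 * inner ℝ (x - p) p + ‖p‖ ^ 2 := by
    rw [← norm_add_sq_real, sub_add_cancel]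
  rw [inversion, dist_eq_norm, vsub_eq_sub, vadd_eq_add, norm_add_sq_real, norm_smul,
    real_inner_smul_left, hx_sq, hp, mul_pow, norm_eq_abs, sq_abs]
  field_simp
  ring

lemma norm_inversion_lt_one (hp : ‖p‖ ^ 2 = 1 + R ^ 2) (hR : R ≠ 0) (hx : ‖x‖ < 1) :
    ‖inversion p R x‖ < 1 := by
  have hxp := ne_center_of_norm_lt_one hp hx
  have hpos : 0 < 1 - ‖inversion p R x‖ ^ 2 := by
    rw [one_sub_norm_inversion_sq hp hxp]
    have := dist_ne_zero.2 hxp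
    have := one_sub_norm_sq_pos hx
    positivity
  exact (sq_lt_one_iff₀ (norm_nonneg _)).1 (sub_pos.1 hpos)

lemma sinhHalfDist_inversion (hp : ‖p‖ ^ 2 = 1 + R ^ 2) (hR : R ≠ 0)
    (hx : x ≠ p) (hy : y ≠ p) :
    sinhHalfDist (inversion p R x) (inversion p R y) = sinhHalfDist x y := by
  set k := R ^ 2 / (dist x p * dist y p) with hk
  have hk_pos : 0 < k := by
    have := dist_pos.2 hx
    have := dist_pos.2 hy
    positivity
  have hnorm : ‖inversion p R x - inversion p R y‖ = k * ‖x - y‖ := by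
    rw [← dist_eq_norm, ← dist_eq_norm, dist_inversion_inversion hx hy]
  have hweight : (1 - ‖inversion p R x‖ ^ 2) * (1 - ‖inversion p R y‖ ^ 2) =
      k ^ 2 * ((1 - ‖x‖ ^ 2) * (1 - ‖y‖ ^ 2)) := by
    rw [one_sub_norm_inversion_sq hp hx, one_sub_norm_inversion_sq hp hy, hk]
    ring
  rw [sinhHalfDist, hnorm, hweight, sqrt_mul (sq_nonneg k), sqrt_sq hk_pos.le,
    mul_div_mul_left _ _ hk_pos.ne', sinhHalfDist]

lemma one_add_norm_inversion_le (hp : ‖p‖ ^ 2 = 1 + R ^ 2) (hR : R ≠ 0) (hx : ‖x‖ < 1) :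
    1 + ‖inversion p R x‖ ≤ (1 + ‖inversion p R 0‖) * (1 + ‖x‖) := by
  set a := inversion p R 0
  have ha : ‖a‖ < 1 := norm_inversion_lt_one hp hR (by simp)
  have hinv : sinhHalfDist (inversion p R x) 0 = sinhHalfDist x a := by
    rw [← inversion_inversion p hR 0]
    exact sinhHalfDist_inversion hp hR (ne_center_of_norm_lt_one hp hx)
      (ne_center_of_norm_lt_one hp ha)
  have htriangle :=
    norm_mul_one_add_le_of_sinhHalfDist_eq hx ha (norm_inversion_lt_one hp hR hx) hinv
  have : 0 ≤ ‖inversion p R x‖ * (‖x‖ * ‖a‖) := by positivity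
  have : 0 ≤ ‖x‖ * ‖a‖ := by positivity
  linarith

lemma ballLogDist_inversion_le {c : ℝ} (hc : 0 ≤ c) (hp : ‖p‖ ^ 2 = 1 + R ^ 2) (hR : R ≠ 0)
    (hx : ‖x‖ < 1) (hy : ‖y‖ < 1) :
    ballLogDist c (inversion p R x) (inversion p R y) ≤
      (1 + ‖inversion p R 0‖) * ballLogDist c x y :=
  ballLogDist_le_mul_of_sinhHalfDist_eq hc (le_add_of_nonneg_right (norm_nonneg _))
    (one_add_norm_inversion_le hp hR hx) (one_add_norm_inversion_le hp hR hy)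
    (sinhHalfDist_inversion hp hR (ne_center_of_norm_lt_one hp hx)
      (ne_center_of_norm_lt_one hp hy))

lemma le_ballLogDist_inversion {c : ℝ} (hc : 0 ≤ c) (hp : ‖p‖ ^ 2 = 1 + R ^ 2) (hR : R ≠ 0)
    (hx : ‖x‖ < 1) (hy : ‖y‖ < 1) :
    1 / (1 + ‖inversion p R 0‖) * ballLogDist c x y ≤
      ballLogDist c (inversion p R x) (inversion p R y) := by
  rw [one_div, inv_mul_le_iff₀ (by positivity)]
  simpa only [inversion_inversion p hR] using ballLogDist_inversion_le hc hp hR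
    (norm_inversion_lt_one hp hR hx) (norm_inversion_lt_one hp hR hy)

end Inversion

section BallInversion

variable {E : Type*} [NormedAddCommGroup E] {a : E}

lemma inv_norm_sq_sub_one_pos (ha0 : a ≠ 0) (ha : ‖a‖ < 1) : 0 < (‖a‖ ^ 2)⁻¹ - 1 :=
  sub_pos.2 ((one_lt_inv₀ (by positivity)).2 (sub_pos.1 (one_sub_norm_sq_pos ha)))

variable [InnerProductSpace ℝ E]

/-- The inversion `σ_a` in the sphere with center `a* = a / ‖a‖²` and radius `√(1 / ‖a‖² - 1)`, for
`0 < ‖a‖ < 1`; it maps the unit ball onto itself and interchanges `a` and `0`. It extends `sigmaInv`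
beyond `ℝⁿ`. -/
def ballInversion (a : E) : E → E :=
  inversion ((‖a‖ ^ 2)⁻¹ • a) √((‖a‖ ^ 2)⁻¹ - 1)

lemma norm_ballInversion_center_sq (ha0 : a ≠ 0) (ha : ‖a‖ < 1) :
    ‖(‖a‖ ^ 2)⁻¹ • a‖ ^ 2 = 1 + √((‖a‖ ^ 2)⁻¹ - 1) ^ 2 := by
  have ha_norm : ‖a‖ ≠ 0 := norm_ne_zero_iff.2 ha0
  rw [sq_sqrt (inv_norm_sq_sub_one_pos ha0 ha).le, norm_smul_of_nonneg (by positivity)]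
  field_simp
  ring

lemma ballInversion_zero (ha0 : a ≠ 0) (ha : ‖a‖ < 1) : ballInversion a 0 = a := by
  have ha_norm : ‖a‖ ≠ 0 := norm_ne_zero_iff.2 ha0
  rw [ballInversion, inversion, div_pow, dist_zero_left, norm_ballInversion_center_sq ha0 ha,
    sq_sqrt (inv_norm_sq_sub_one_pos ha0 ha).le, vsub_eq_sub, vadd_eq_add]
  match_scalars
  field_simp
  ring

lemma sigmaInv_eq_ballInversion {n : ℕ} {a : EuclideanSpace ℝ (Fin n)} (ha0 : a ≠ 0)
    (ha : ‖a‖ < 1) : sigmaInv a = ballInversion a := by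
  ext1 x
  rw [sigmaInv, ballInversion, inversion, div_pow, sq_sqrt (inv_norm_sq_sub_one_pos ha0 ha).le,
    dist_eq_norm, vsub_eq_sub, vadd_eq_add, add_comm]

theorem mobius_ball_lipschitz_general {F : Type*} [SeminormedAddCommGroup F] [NormedSpace ℝ F]
    (ha0 : a ≠ 0) (ha : ‖a‖ < 1) (A : E →ₗᵢ[ℝ] F) {x y : E} (hx : ‖x‖ < 1) (hy : ‖y‖ < 1)
    {c : ℝ} (hc : 0 ≤ c) :
    1 / (1 + ‖a‖) * ballLogDist c x y ≤
        ballLogDist c (A (ballInversion a x)) (A (ballInversion a y)) ∧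
      ballLogDist c (A (ballInversion a x)) (A (ballInversion a y)) ≤
        (1 + ‖a‖) * ballLogDist c x y := by
  have horth := norm_ballInversion_center_sq ha0 ha
  have hR := (sqrt_pos.2 (inv_norm_sq_sub_one_pos ha0 ha)).ne'
  have hlower := le_ballLogDist_inversion hc horth hR hx hy
  have hupper := ballLogDist_inversion_le hc horth hR hx hy
  rw [← ballInversion, ballInversion_zero ha0 ha] at hlower hupper
  rw [ballLogDist_map]
  exact ⟨hlower, hupper⟩

end BallInversion

theorem mobius_ball_lipschitz (n : ℕ) (hn : 2 ≤ n)
    (a : EuclideanSpace ℝ (Fin n)) (haB : ‖a‖ < 1) (ha0 : a ≠ 0)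
    (A : EuclideanSpace ℝ (Fin n) →ₗᵢ[ℝ] EuclideanSpace ℝ (Fin n))
    (f : EuclideanSpace ℝ (Fin n) → EuclideanSpace ℝ (Fin n))
    (hf : ∀ x, f x = A (sigmaInv a x))
    (x y : EuclideanSpace ℝ (Fin n)) (hx : ‖x‖ < 1) (hy : ‖y‖ < 1)
    (c : ℝ) (hc : 0 < c) :
    (1 / (1 + ‖a‖)) * hB c x y ≤ hB c (f x) (f y) ∧
      hB c (f x) (f y) ≤ (1 + ‖a‖) * hB c x y := by
  rw [hf, hf, sigmaInv_eq_ballInversion ha0 haB]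
  exact mobius_ball_lipschitz_general ha0 haB A hx hy hc.le
end
end

section
/- Let n ≥ 2, a ∈ 𝔹ⁿ \ {0}, t ∈ (0, |a|), and put x = t·a/|a|, y = −x. Then |σ_a(x) − σ_a(y)| = 2t(1 − |a|²)/(1 − |a|²t²), 1 − |σ_a(x)| = (1 − |a|)(1 + t)/(1 − t|a|), and 1 − |σ_a(y)| = (1 − |a|)(1 − t)/(1 + t|a|). -/
noncomputable section

open Real Filter

/-!
Inversions distort distances by `|σ x - σ y| = r² |x - y| / (|x - a*| |y - a*|)`. On the line
through `0` and `a`, where `a*` sits at position `1 / |a|`, this is an explicit rational function of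
the positions of `x` and `y`. Since `σ_a` sends `a` to `0`, taking `y = a` gives `|σ_a(x)|` as well.
-/

open EuclideanGeometry

theorem norm_div_norm_smul_sub_div_norm_smul {E : Type*} [NormedAddCommGroup E] [NormedSpace ℝ E]
    {a : E} (ha : a ≠ 0) (s t : ℝ) : ‖(s / ‖a‖) • a - (t / ‖a‖) • a‖ = |s - t| := by
  rw [← sub_smul, ← sub_div, norm_smul, norm_div, norm_norm,
    div_mul_cancel₀ _ (norm_ne_zero_iff.mpr ha), Real.norm_eq_abs]

section SigmaInv

variable {n : ℕ} {a x y : EuclideanSpace ℝ (Fin n)} {s t : ℝ}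

/-- The point `a* = a / |a|²`, the center of the inversion `σ_a`. -/
def sigmaCenter (a : EuclideanSpace ℝ (Fin n)) : EuclideanSpace ℝ (Fin n) :=
  (‖a‖ ^ 2)⁻¹ • a

/-- The radius `r = √(1 / |a|² - 1)` of the inversion `σ_a`; it has the junk value `0` for `a = 0`
and for `|a| > 1`. -/
def sigmaRadius (a : EuclideanSpace ℝ (Fin n)) : ℝ :=
  √((‖a‖ ^ 2)⁻¹ - 1)

theorem sigmaRadius_sq (ha0 : a ≠ 0) (ha1 : ‖a‖ ≤ 1) :
    sigmaRadius a ^ 2 = (1 - ‖a‖ ^ 2) / ‖a‖ ^ 2 := by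
  have hpos : 0 < ‖a‖ ^ 2 := pow_pos (norm_pos_iff.mpr ha0) 2
  have hle : 1 ≤ (‖a‖ ^ 2)⁻¹ := one_le_inv₀ hpos |>.mpr (pow_le_one₀ (norm_nonneg a) ha1)
  rw [sigmaRadius, Real.sq_sqrt (sub_nonneg.mpr hle), sub_div, one_div, div_self hpos.ne']

theorem sigmaInv_eq_inversion (ha0 : a ≠ 0) (ha1 : ‖a‖ ≤ 1) (x : EuclideanSpace ℝ (Fin n)) :
    sigmaInv a x = inversion (sigmaCenter a) (sigmaRadius a) x := by
  have hpos : 0 < ‖a‖ ^ 2 := pow_pos (norm_pos_iff.mpr ha0) 2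
  rw [inversion, div_pow, sigmaRadius_sq ha0 ha1, sub_div, one_div, div_self hpos.ne',
    dist_eq_norm, vsub_eq_sub, vadd_eq_add, add_comm, sigmaInv, sigmaCenter]

theorem norm_sigmaInv_sub_sigmaInv (ha0 : a ≠ 0) (ha1 : ‖a‖ ≤ 1)
    (hx : x ≠ sigmaCenter a) (hy : y ≠ sigmaCenter a) :
    ‖sigmaInv a x - sigmaInv a y‖ =
      sigmaRadius a ^ 2 / (‖x - sigmaCenter a‖ * ‖y - sigmaCenter a‖) * ‖x - y‖ := by
  simpa only [sigmaInv_eq_inversion ha0 ha1, dist_eq_norm] using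
    dist_inversion_inversion hx hy (sigmaRadius a)

theorem sigmaInv_self (ha : ‖a‖ ≠ 1) : sigmaInv a a = 0 := by
  rcases eq_or_ne a 0 with rfl | ha0
  · simp only [sigmaInv, smul_zero, sub_zero, add_zero]
  have hA : ‖a‖ ≠ 0 := norm_ne_zero_iff.mpr ha0
  have hA' : ‖a‖ ^ 2 - 1 ≠ 0 :=
    sub_ne_zero.mpr ((pow_eq_one_iff_of_nonneg (norm_nonneg a) two_ne_zero).not.mpr ha)
  have hsub : a - (‖a‖ ^ 2)⁻¹ • a = (1 - (‖a‖ ^ 2)⁻¹) • a := by rw [sub_smul, one_smul]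
  have hcoeff : (‖a‖ ^ 2)⁻¹ + ((‖a‖ ^ 2)⁻¹ - 1) / ((1 - (‖a‖ ^ 2)⁻¹) ^ 2 * ‖a‖ ^ 2) *
      (1 - (‖a‖ ^ 2)⁻¹) = 0 := by
    field_simp
    ring
  rw [sigmaInv, hsub, norm_smul, mul_pow, Real.norm_eq_abs, sq_abs, smul_smul, ← add_smul, hcoeff,
    zero_smul]

theorem norm_div_norm_smul_sub_sigmaCenter (ha0 : a ≠ 0) (hs : s * ‖a‖ ≤ 1) :
    ‖(s / ‖a‖) • a - sigmaCenter a‖ = (1 - s * ‖a‖) / ‖a‖ := by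
  have hpos : 0 < ‖a‖ := norm_pos_iff.mpr ha0
  have hcenter : sigmaCenter a = (‖a‖⁻¹ / ‖a‖) • a := by
    rw [sigmaCenter, sq, mul_inv, div_eq_mul_inv]
  have hle : s ≤ ‖a‖⁻¹ := by rwa [← one_div, le_div_iff₀ hpos]
  rw [hcenter, norm_div_norm_smul_sub_div_norm_smul ha0, abs_sub_comm,
    abs_of_nonneg (sub_nonneg.mpr hle), sub_div, one_div, mul_div_cancel_right₀ _ hpos.ne']

theorem div_norm_smul_ne_sigmaCenter (ha0 : a ≠ 0) (hs : s * ‖a‖ < 1) :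
    (s / ‖a‖) • a ≠ sigmaCenter a := by
  rw [← sub_ne_zero, ← norm_pos_iff, norm_div_norm_smul_sub_sigmaCenter ha0 hs.le]
  exact div_pos (sub_pos.mpr hs) (norm_pos_iff.mpr ha0)

theorem norm_sigmaInv_div_norm_smul_sub_sigmaInv (ha0 : a ≠ 0) (ha1 : ‖a‖ ≤ 1)
    (hs : s * ‖a‖ < 1) (ht : t * ‖a‖ < 1) :
    ‖sigmaInv a ((s / ‖a‖) • a) - sigmaInv a ((t / ‖a‖) • a)‖ =
      |s - t| * (1 - ‖a‖ ^ 2) / ((1 - s * ‖a‖) * (1 - t * ‖a‖)) := by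
  have hA : ‖a‖ ≠ 0 := norm_ne_zero_iff.mpr ha0
  rw [norm_sigmaInv_sub_sigmaInv ha0 ha1 (div_norm_smul_ne_sigmaCenter ha0 hs)
      (div_norm_smul_ne_sigmaCenter ha0 ht),
    norm_div_norm_smul_sub_sigmaCenter ha0 hs.le, norm_div_norm_smul_sub_sigmaCenter ha0 ht.le,
    norm_div_norm_smul_sub_div_norm_smul ha0, sigmaRadius_sq ha0 ha1]
  field_simp

theorem norm_sigmaInv_div_norm_smul (ha0 : a ≠ 0) (ha1 : ‖a‖ < 1) (hs : s * ‖a‖ < 1) :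
    ‖sigmaInv a ((s / ‖a‖) • a)‖ = |s - ‖a‖| / (1 - s * ‖a‖) := by
  have hAA : ‖a‖ * ‖a‖ < 1 := mul_lt_one_of_nonneg_of_lt_one_left (norm_nonneg a) ha1 ha1.le
  have hdist := norm_sigmaInv_div_norm_smul_sub_sigmaInv ha0 ha1.le hs hAA
  rwa [div_self (norm_ne_zero_iff.mpr ha0), one_smul, sigmaInv_self ha1.ne, sub_zero, ← sq,
    mul_div_mul_right _ _ (by rw [sq]; exact (sub_pos.mpr hAA).ne')] at hdist

theorem one_sub_norm_sigmaInv_div_norm_smul (ha0 : a ≠ 0) (ha1 : ‖a‖ < 1) (hs : s ≤ ‖a‖) :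
    1 - ‖sigmaInv a ((s / ‖a‖) • a)‖ = (1 - ‖a‖) * (1 + s) / (1 - s * ‖a‖) := by
  have hsA : s * ‖a‖ < 1 := by nlinarith [norm_nonneg a]
  rw [norm_sigmaInv_div_norm_smul ha0 ha1 hsA, abs_sub_comm, abs_of_nonneg (sub_nonneg.mpr hs),
    one_sub_div (sub_pos.mpr hsA).ne']
  ring

end SigmaInv

theorem sigma_a_symmetric_points (n : ℕ) (hn : 2 ≤ n)
    (a : EuclideanSpace ℝ (Fin n)) (haB : ‖a‖ < 1) (ha0 : a ≠ 0)
    (t : ℝ) (ht0 : 0 < t) (hta : t < ‖a‖)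
    (x y : EuclideanSpace ℝ (Fin n))
    (hx : x = (t / ‖a‖) • a) (hy : y = -x) :
    ‖sigmaInv a x - sigmaInv a y‖ = 2 * t * (1 - ‖a‖ ^ 2) / (1 - ‖a‖ ^ 2 * t ^ 2) ∧
      1 - ‖sigmaInv a x‖ = (1 - ‖a‖) * (1 + t) / (1 - t * ‖a‖) ∧
      1 - ‖sigmaInv a y‖ = (1 - ‖a‖) * (1 - t) / (1 + t * ‖a‖) := by
  have hy' : y = (-t / ‖a‖) • a := by rw [hy, hx, neg_div, neg_smul]
  subst hx hy'
  have ht : t * ‖a‖ < 1 := mul_lt_one_of_nonneg_of_lt_one_left ht0.le (hta.trans haB) haB.le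
  have hneg : -t * ‖a‖ < 1 := by nlinarith
  refine ⟨?_, one_sub_norm_sigmaInv_div_norm_smul ha0 haB hta.le, ?_⟩
  · rw [norm_sigmaInv_div_norm_smul_sub_sigmaInv ha0 haB.le ht hneg, sub_neg_eq_add, ← two_mul,
      abs_of_pos (mul_pos two_pos ht0)]
    congr 1
    ring
  · simpa only [neg_mul, sub_neg_eq_add, ← sub_eq_add_neg] using
      one_sub_norm_sigmaInv_div_norm_smul ha0 haB (s := -t) (by linarith)
end
end

section
/- Let n ≥ 2, c > 0, and let σ(x) = −eₙ + 2(x + eₙ)/|x + eₙ|² be the inversion in the sphere S^{n−1}(−eₙ, √2). For t ∈ (0,1) put x_t = t·e₁ and y_t = −t·e₁. Then lim_{t→0⁺} h_{ℍⁿ,c}(σ(x_t), σ(y_t)) / h_{𝔹ⁿ,c}(x_t, y_t) = 2. Consequently, the constant 2 in the bound h_{ℍⁿ,c}(σ(x), σ(y)) ≤ 2·h_{𝔹ⁿ,c}(x, y) is best possible. -/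
/-!
The inversion `σ` divides distances by `|x + eₙ| |y + eₙ| / 2`, and `σx` has height
`(1 - |x|²) / |x + eₙ|²`, so the factors depending on the centre `-eₙ` cancel:
`h_ℍ(σx, σy) = log (1 + 2c|x - y| / √((1 - |x|²)(1 - |y|²)))`. Since `log (1 + u) ~ u`, near the
origin `h_ℍ(σx, σy) ~ 2c|x - y|` while `h_𝔹(x, y) ~ c|x - y|`, so the quotient tends to `2` however
the pair of distinct points `x, y` approaches the origin.
-/

noncomputable section

open Real Filter

open Asymptotics Topology EuclideanGeometry
open scoped RealInnerProductSpace

theorem isEquivalent_log_one_add : (fun u : ℝ => log (1 + u)) ~[𝓝 0] id := by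
  have h : HasDerivAt (fun u : ℝ => log (1 + u)) 1 0 := by
    simpa using ((hasDerivAt_id (0 : ℝ)).const_add 1).log (by simp)
  simpa using! h.isLittleO

theorem isEquivalent_log_one_add_div {α : Type*} {l : Filter α} {a s : α → ℝ}
    (ha : Tendsto a l (𝓝 0)) (hs : Tendsto s l (𝓝 1)) :
    (fun i => log (1 + a i / s i)) ~[l] a := by
  have hquot : Tendsto (fun i => a i / s i) l (𝓝 0) := by
    simpa only [zero_div] using! ha.div hs one_ne_zero
  have hequiv : (fun i => a i / s i) ~[l] a := by
    simpa using! (IsEquivalent.refl (u := a)).div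
      ((isEquivalent_const_iff_tendsto one_ne_zero).2 hs)
  exact (isEquivalent_log_one_add.comp_tendsto hquot).trans hequiv

theorem tendsto_smul_neg_smul_nhdsWithin_compl_diagonal {E : Type*} [AddCommGroup E] [Module ℝ E]
    [TopologicalSpace E] [ContinuousSMul ℝ E] [ContinuousNeg E] {v : E} (hv : v ≠ 0) :
    Tendsto (fun t : ℝ => (t • v, -(t • v))) (𝓝[≠] 0) (𝓝[(Set.diagonal E)ᶜ] (0, 0)) := by
  refine tendsto_nhdsWithin_iff.2 ⟨?_, ?_⟩
  · have hcont : Continuous fun t : ℝ => (t • v, -(t • v)) := by fun_prop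
    simpa using (hcont.tendsto 0).mono_left nhdsWithin_le_nhds
  · filter_upwards [self_mem_nhdsWithin] with t ht
    rw [Set.mem_compl_iff, Set.mem_diagonal_iff, eq_neg_iff_add_eq_zero, ← two_smul ℝ]
    exact smul_ne_zero two_ne_zero (smul_ne_zero ht hv)

section InversionOfBall

variable {n : ℕ}

theorem norm_eLast (hn : 0 < n) : ‖eLast n‖ = 1 := by
  simp [eLast, hn]

theorem eFirst_ne_zero (hn : 0 < n) : eFirst n ≠ 0 := by
  simp [eFirst, hn]

theorem norm_add_eLast_ne_zero {x : EuclideanSpace ℝ (Fin n)} (hx : x ≠ -eLast n) :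
    ‖x + eLast n‖ ≠ 0 := by
  rwa [norm_ne_zero_iff, ne_eq, add_eq_zero_iff_eq_neg]

theorem lastCoord_eq_inner (x : EuclideanSpace ℝ (Fin n)) : lastCoord x = ⟪x, eLast n⟫ := by
  by_cases hn : 0 < n
  · simp [lastCoord, eLast, hn, EuclideanSpace.inner_single_right]
  · simp [lastCoord, eLast, hn]

theorem sigmaBH_eq_inversion (x : EuclideanSpace ℝ (Fin n)) :
    sigmaBH x = inversion (-eLast n) √2 x := by
  simp [sigmaBH, inversion, dist_eq_norm, div_pow, add_comm]

theorem norm_sigmaBH_sub {x y : EuclideanSpace ℝ (Fin n)} (hx : x ≠ -eLast n)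
    (hy : y ≠ -eLast n) :
    ‖sigmaBH x - sigmaBH y‖ = 2 * ‖x - y‖ / (‖x + eLast n‖ * ‖y + eLast n‖) := by
  rw [sigmaBH_eq_inversion, sigmaBH_eq_inversion, ← dist_eq_norm,
    dist_inversion_inversion hx hy, Real.sq_sqrt zero_le_two, dist_eq_norm, dist_eq_norm,
    dist_eq_norm, sub_neg_eq_add, sub_neg_eq_add, div_mul_eq_mul_div]

theorem lastCoord_sigmaBH (hn : 0 < n) {x : EuclideanSpace ℝ (Fin n)} (hx : x ≠ -eLast n) :
    lastCoord (sigmaBH x) = (1 - ‖x‖ ^ 2) / ‖x + eLast n‖ ^ 2 := by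
  have hx_add := norm_add_eLast_ne_zero hx
  have hsq : ‖x + eLast n‖ ^ 2 = ‖x‖ ^ 2 + 2 * ⟪x, eLast n⟫ + 1 := by
    rw [norm_add_sq_real, norm_eLast hn, one_pow]
  have hinner : lastCoord (sigmaBH x) = -1 + 2 / ‖x + eLast n‖ ^ 2 * (⟪x, eLast n⟫ + 1) := by
    rw [lastCoord_eq_inner, sigmaBH, inner_add_left, inner_neg_left, real_inner_smul_left,
      inner_add_left, real_inner_self_eq_norm_sq, norm_eLast hn, one_pow]
  rw [hinner]
  field_simp
  linear_combination -hsq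

theorem hH_sigmaBH (hn : 0 < n) (c : ℝ) {x y : EuclideanSpace ℝ (Fin n)}
    (hx : x ≠ -eLast n) (hy : y ≠ -eLast n) :
    hH c (sigmaBH x) (sigmaBH y) =
      log (1 + 2 * c * ‖x - y‖ / √((1 - ‖x‖ ^ 2) * (1 - ‖y‖ ^ 2))) := by
  have hx_add := norm_add_eLast_ne_zero hx
  have hy_add := norm_add_eLast_ne_zero hy
  have hsqrt : √(lastCoord (sigmaBH x) * lastCoord (sigmaBH y)) =
      √((1 - ‖x‖ ^ 2) * (1 - ‖y‖ ^ 2)) / (‖x + eLast n‖ * ‖y + eLast n‖) := by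
    rw [lastCoord_sigmaBH hn hx, lastCoord_sigmaBH hn hy, div_mul_div_comm, ← mul_pow,
      Real.sqrt_div' _ (sq_nonneg _), Real.sqrt_sq (by positivity)]
  rw [hH, hsqrt, norm_sigmaBH_sub hx hy, mul_div_assoc', div_div_div_cancel_right₀ (by positivity),
    mul_left_comm, mul_assoc]

theorem isEquivalent_hB (c : ℝ) :
    (fun p : EuclideanSpace ℝ (Fin n) × EuclideanSpace ℝ (Fin n) => hB c p.1 p.2)
      ~[𝓝 (0, 0)] fun p => c * ‖p.1 - p.2‖ := by
  refine isEquivalent_log_one_add_div ?_ ?_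
  · exact Continuous.tendsto' (by fun_prop) _ _ (by simp)
  · exact Continuous.tendsto' (by fun_prop) _ _ (by simp)

theorem isEquivalent_hH_sigmaBH (hn : 0 < n) (c : ℝ) :
    (fun p : EuclideanSpace ℝ (Fin n) × EuclideanSpace ℝ (Fin n) =>
      hH c (sigmaBH p.1) (sigmaBH p.2)) ~[𝓝 (0, 0)] fun p => 2 * c * ‖p.1 - p.2‖ := by
  have hne : ∀ᶠ x in 𝓝 (0 : EuclideanSpace ℝ (Fin n)), x ≠ -eLast n :=
    eventually_ne_nhds fun h => by simpa [neg_eq_zero.1 h.symm] using norm_eLast hn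
  have hformula : (fun p : EuclideanSpace ℝ (Fin n) × EuclideanSpace ℝ (Fin n) =>
      hH c (sigmaBH p.1) (sigmaBH p.2)) =ᶠ[𝓝 (0, 0)] fun p =>
        log (1 + 2 * c * ‖p.1 - p.2‖ / √((1 - ‖p.1‖ ^ 2) * (1 - ‖p.2‖ ^ 2))) := by
    filter_upwards [hne.prodMk_nhds hne] with p hp using hH_sigmaBH hn c hp.1 hp.2
  refine hformula.trans_isEquivalent (isEquivalent_log_one_add_div ?_ ?_)
  · exact Continuous.tendsto' (by fun_prop) _ _ (by simp)
  · exact Continuous.tendsto' (by fun_prop) _ _ (by simp)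

end InversionOfBall

theorem ball_to_halfspace_constant_two_sharp_general {n : ℕ} (hn : 0 < n) {c : ℝ} (hc : c ≠ 0) :
    Tendsto
      (fun p : EuclideanSpace ℝ (Fin n) × EuclideanSpace ℝ (Fin n) =>
        hH c (sigmaBH p.1) (sigmaBH p.2) / hB c p.1 p.2)
      (𝓝[(Set.diagonal _)ᶜ] (0, 0)) (𝓝 2) := by
  have hequiv := ((isEquivalent_hH_sigmaBH hn c).div (isEquivalent_hB c)).mono
    (nhdsWithin_le_nhds (s := (Set.diagonal (EuclideanSpace ℝ (Fin n)))ᶜ))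
  refine hequiv.symm.tendsto_nhds (tendsto_const_nhds.congr' ?_)
  filter_upwards [self_mem_nhdsWithin] with p hp
  have hdist : ‖p.1 - p.2‖ ≠ 0 := norm_ne_zero_iff.2 (sub_ne_zero.2 hp)
  simp only [Pi.div_apply]
  field_simp

theorem ball_to_halfspace_constant_two_sharp (n : ℕ) (hn : 2 ≤ n)
    (c : ℝ) (hc : 0 < c) :
    Filter.Tendsto
      (fun t : ℝ =>
        hH c (sigmaBH (t • eFirst n)) (sigmaBH (-(t • eFirst n))) /
          hB c (t • eFirst n) (-(t • eFirst n)))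
      (nhdsWithin 0 (Set.Ioo (0 : ℝ) 1)) (nhds 2) := by
  have hn_pos : 0 < n := two_pos.trans_le hn
  simpa only [Function.comp_def] using
    ((ball_to_halfspace_constant_two_sharp_general hn_pos hc.ne').comp
      (tendsto_smul_neg_smul_nhdsWithin_compl_diagonal (eFirst_ne_zero hn_pos))).mono_left
      (nhdsWithin_mono 0 fun _ ht => ht.1.ne')
end
end

section
/- Let n ≥ 1 and let σ(x) = x/|x|² be the inversion in the unit sphere S^{n−1}(0,1), which maps ℍⁿ onto ℍⁿ. Then for all x, y ∈ ℍⁿ and all c > 0: h_{ℍⁿ,c}(σ(x), σ(y)) = h_{ℍⁿ,c}(x, y). -/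
noncomputable section

open Real Filter

/-!
An inversion with center `a` and radius `R` scales the distance of `x` and `y` by
`R² / (|x - a| |y - a|)`, and scales the value at `x` of an affine function vanishing at `a` by
`(R / |x - a|)²`. Hence the geometric mean of its values at `x` and `y` is scaled by the same factor
as the distance, and their quotient is invariant. For the last coordinate, `a = 0` and `R = 1`, this
quotient is the one inside the logarithm defining `h_{ℍⁿ,c}`.
-/

/-- The last coordinate as a linear functional on `ℝⁿ`, so that facts about inversions and affine
functions apply to it; like `lastCoord`, it is zero when `n = 0`. -/
@[simps]
def lastCoordₗ (n : ℕ) : EuclideanSpace ℝ (Fin n) →ₗ[ℝ] ℝ where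
  toFun := lastCoord
  map_add' x y := by unfold lastCoord; split_ifs <;> simp
  map_smul' t x := by unfold lastCoord; split_ifs <;> simp

theorem ne_zero_of_lastCoord_ne_zero {n : ℕ} {x : EuclideanSpace ℝ (Fin n)}
    (hx : lastCoord x ≠ 0) : x ≠ 0 := by
  rintro rfl
  exact hx (map_zero (lastCoordₗ n))

section Inversion

open EuclideanGeometry

theorem inversion_zero_one {V : Type*} [NormedAddCommGroup V] [InnerProductSpace ℝ V] (x : V) :
    inversion (0 : V) 1 x = (‖x‖ ^ 2)⁻¹ • x := by
  simp [inversion]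

variable {V P : Type*} [NormedAddCommGroup V] [InnerProductSpace ℝ V] [MetricSpace P]
  [NormedAddTorsor V P] {c x y : P} {R : ℝ}

theorem affineMap_inversion_of_map_center_eq_zero {W : Type*} [AddCommGroup W] [Module ℝ W]
    (f : P →ᵃ[ℝ] W) (hf : f c = 0) (R : ℝ) (x : P) :
    f (inversion c R x) = (R / dist x c) ^ 2 • f x := by
  rw [inversion_eq_lineMap, f.apply_lineMap, hf, AffineMap.lineMap_apply_module, smul_zero,
    zero_add]

theorem sqrt_affineMap_inversion_mul (f : P →ᵃ[ℝ] ℝ) (hf : f c = 0) (R : ℝ) (x y : P) :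
    √(f (inversion c R x) * f (inversion c R y)) =
      R ^ 2 / (dist x c * dist y c) * √(f x * f y) := by
  have hfactor : f (inversion c R x) * f (inversion c R y) =
      (R ^ 2 / (dist x c * dist y c)) ^ 2 * (f x * f y) := by
    simp only [affineMap_inversion_of_map_center_eq_zero f hf, smul_eq_mul]
    ring
  rw [hfactor, sqrt_mul (sq_nonneg _), sqrt_sq (by positivity)]

theorem dist_inversion_div_sqrt_affineMap (f : P →ᵃ[ℝ] ℝ) (hf : f c = 0) (hR : R ≠ 0)
    (hx : x ≠ c) (hy : y ≠ c) :
    dist (inversion c R x) (inversion c R y) / √(f (inversion c R x) * f (inversion c R y)) =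
      dist x y / √(f x * f y) := by
  have hscale : R ^ 2 / (dist x c * dist y c) ≠ 0 :=
    div_ne_zero (pow_ne_zero 2 hR) (mul_ne_zero (dist_ne_zero.2 hx) (dist_ne_zero.2 hy))
  rw [dist_inversion_inversion hx hy, sqrt_affineMap_inversion_mul f hf,
    mul_div_mul_left _ _ hscale]

end Inversion

theorem hH_invariant_under_unit_sphere_inversion (n : ℕ) (hn : 1 ≤ n)
    (x y : EuclideanSpace ℝ (Fin n))
    (hx : 0 < lastCoord x) (hy : 0 < lastCoord y)
    (c : ℝ) (hc : 0 < c) :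
    hH c ((‖x‖ ^ 2)⁻¹ • x) ((‖y‖ ^ 2)⁻¹ • y) = hH c x y := by
  have hx0 : x ≠ 0 := ne_zero_of_lastCoord_ne_zero hx.ne'
  have hy0 : y ≠ 0 := ne_zero_of_lastCoord_ne_zero hy.ne'
  have hratio : ‖(‖x‖ ^ 2)⁻¹ • x - (‖y‖ ^ 2)⁻¹ • y‖ /
      √(lastCoord ((‖x‖ ^ 2)⁻¹ • x) * lastCoord ((‖y‖ ^ 2)⁻¹ • y)) =
        ‖x - y‖ / √(lastCoord x * lastCoord y) := by
    simpa only [inversion_zero_one, dist_eq_norm, LinearMap.coe_toAffineMap, lastCoordₗ_apply] using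
      dist_inversion_div_sqrt_affineMap (lastCoordₗ n).toAffineMap
        (map_zero (lastCoordₗ n)) one_ne_zero hx0 hy0
  simp only [hH, mul_div_assoc, hratio]
end
end

section
/- Let n ≥ 2, a ∈ 𝔹ⁿ \ {0}, c > 0, and let σ_a be the inversion in the sphere S^{n−1}(a*, r). Then for all x, y ∈ 𝔹ⁿ: h_{𝔹ⁿ,c}(σ_a(x), σ_a(y)) ≤ log(1 + c·(1 + |a|)·|x − y|/√((1 − |x|)(1 − |y|))). -/
noncomputable section

open Real Filter

/-!
The sphere with center `b` and radius `R` is orthogonal to the sphere `‖x‖ = ρ` exactly when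
`‖b‖ ^ 2 = ρ ^ 2 + R ^ 2`. Inversion `σ` in the former has conformal factor
`k x = (R / ‖x - b‖) ^ 2`: it multiplies `‖x - y‖ ^ 2` by `k x * k y` and, by orthogonality,
multiplies `ρ ^ 2 - ‖x‖ ^ 2` by `k x`. As `‖x - b‖ ≤ ‖b‖ + ‖x‖`, the second fact bounds `‖σ x‖`
from above, whence `k x * (ρ - ‖x‖) ≤ (1 + ρ / ‖b‖) * (ρ - ‖σ x‖)`. The geometric mean of these
bounds at `x` and `y` compares the two quotients inside the logarithms. For `σ_a` one has `ρ = 1`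
and `ρ / ‖b‖ = ‖a‖`.
-/

section Inversion

open EuclideanGeometry

variable {E : Type*} [NormedAddCommGroup E] {a b x y : E} {c R ρ : ℝ}

lemma ne_of_norm_sq_eq_of_norm_lt (hb : ‖b‖ ^ 2 = ρ ^ 2 + R ^ 2) (hx : ‖x‖ < ρ) : x ≠ b := by
  rintro rfl
  nlinarith [norm_nonneg x, sq_nonneg R]

variable [InnerProductSpace ℝ E]

lemma sq_sub_norm_inversion_sq (hb : ‖b‖ ^ 2 = ρ ^ 2 + R ^ 2) (hxb : x ≠ b) :
    ρ ^ 2 - ‖inversion b R x‖ ^ 2 = (R / dist x b) ^ 2 * (ρ ^ 2 - ‖x‖ ^ 2) := by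
  have hfactor : (R / dist x b) ^ 2 * ‖x - b‖ ^ 2 = R ^ 2 := by
    rw [← dist_eq_norm, ← mul_pow, div_mul_cancel₀ _ (dist_ne_zero.2 hxb)]
  have hx : ‖x‖ ^ 2 = ‖x - b‖ ^ 2 + 2 * inner ℝ (x - b) b + ‖b‖ ^ 2 := by
    rw [← norm_add_sq_real, sub_add_cancel]
  rw [inversion, vsub_eq_sub, vadd_eq_add, norm_add_sq_real, norm_smul, real_inner_smul_left,
    mul_pow, Real.norm_eq_abs, sq_abs, hx, hb]
  linear_combination (1 - (R / dist x b) ^ 2) * hfactor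

lemma norm_inversion_lt (hb : ‖b‖ ^ 2 = ρ ^ 2 + R ^ 2) (hR : R ≠ 0) (hx : ‖x‖ < ρ) :
    ‖inversion b R x‖ < ρ := by
  have hxb := ne_of_norm_sq_eq_of_norm_lt hb hx
  have hdist : 0 < dist x b := dist_pos.2 hxb
  have hx_sq : ‖x‖ ^ 2 < ρ ^ 2 := by gcongr
  refine lt_of_pow_lt_pow_left₀ 2 ((norm_nonneg x).trans hx.le) (sub_pos.1 ?_)
  rw [sq_sub_norm_inversion_sq hb hxb]
  exact mul_pos (by positivity) (sub_pos.2 hx_sq)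

lemma norm_inversion_le (hb : ‖b‖ ^ 2 = ρ ^ 2 + R ^ 2) (hxb : x ≠ b) (hx : ‖x‖ ≤ |ρ|) :
    ‖inversion b R x‖ ≤ (ρ ^ 2 + ‖b‖ * ‖x‖) / (‖b‖ + ‖x‖) := by
  have hdist : 0 < dist x b := dist_pos.2 hxb
  have htri : dist x b ≤ ‖b‖ + ‖x‖ := by
    rw [dist_eq_norm, add_comm]
    exact norm_sub_le x b
  have hx_sq : 0 ≤ ρ ^ 2 - ‖x‖ ^ 2 := sub_nonneg.2 (sq_le_sq.2 (by rwa [abs_norm]))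
  have hpos : 0 < ‖b‖ + ‖x‖ := hdist.trans_le htri
  have hfactor : (R / (‖b‖ + ‖x‖)) ^ 2 * (ρ ^ 2 - ‖x‖ ^ 2) ≤ ρ ^ 2 - ‖inversion b R x‖ ^ 2 := by
    rw [sq_sub_norm_inversion_sq hb hxb, div_pow, div_pow]
    gcongr
  refine le_of_sq_le_sq ?_ (by positivity)
  calc ‖inversion b R x‖ ^ 2 ≤ ρ ^ 2 - (R / (‖b‖ + ‖x‖)) ^ 2 * (ρ ^ 2 - ‖x‖ ^ 2) := by linarith
    _ = ((ρ ^ 2 + ‖b‖ * ‖x‖) / (‖b‖ + ‖x‖)) ^ 2 := by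
      field_simp
      linear_combination (ρ ^ 2 - ‖x‖ ^ 2) * hb

lemma div_dist_sq_mul_sub_norm_le (hb : ‖b‖ ^ 2 = ρ ^ 2 + R ^ 2) (hR : R ≠ 0) (hx : ‖x‖ < ρ) :
    (R / dist x b) ^ 2 * (ρ - ‖x‖) ≤ (1 + ρ / ‖b‖) * (ρ - ‖inversion b R x‖) := by
  have hρ : 0 < ρ := (norm_nonneg x).trans_lt hx
  have hb_pos : 0 < ‖b‖ := by
    refine (norm_nonneg b).lt_of_ne' fun h ↦ ?_
    nlinarith [sq_nonneg R]
  have hxb := ne_of_norm_sq_eq_of_norm_lt hb hx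
  have hadd : ρ + ‖inversion b R x‖ ≤ (1 + ρ / ‖b‖) * (ρ + ‖x‖) :=
    calc ρ + ‖inversion b R x‖ ≤ ρ + (ρ ^ 2 + ‖b‖ * ‖x‖) / (‖b‖ + ‖x‖) := by
          gcongr
          exact norm_inversion_le hb hxb (hx.le.trans (le_abs_self ρ))
      _ = (‖b‖ + ρ) * (ρ + ‖x‖) / (‖b‖ + ‖x‖) := by field_simp; ring
      _ ≤ (‖b‖ + ρ) * (ρ + ‖x‖) / ‖b‖ := by
          gcongr
          exact le_add_of_nonneg_right (norm_nonneg x)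
      _ = (1 + ρ / ‖b‖) * (ρ + ‖x‖) := by field_simp
  refine le_of_mul_le_mul_right ?_ (add_pos_of_pos_of_nonneg hρ (norm_nonneg x))
  calc (R / dist x b) ^ 2 * (ρ - ‖x‖) * (ρ + ‖x‖)
      = (ρ - ‖inversion b R x‖) * (ρ + ‖inversion b R x‖) := by
        linear_combination -sq_sub_norm_inversion_sq hb hxb
    _ ≤ (ρ - ‖inversion b R x‖) * ((1 + ρ / ‖b‖) * (ρ + ‖x‖)) :=
        mul_le_mul_of_nonneg_left hadd (sub_nonneg.2 (norm_inversion_lt hb hR hx).le)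
    _ = (1 + ρ / ‖b‖) * (ρ - ‖inversion b R x‖) * (ρ + ‖x‖) := by ring

theorem dist_inversion_div_sqrt_le (hb : ‖b‖ ^ 2 = ρ ^ 2 + R ^ 2) (hR : R ≠ 0)
    (hx : ‖x‖ < ρ) (hy : ‖y‖ < ρ) :
    dist (inversion b R x) (inversion b R y) /
        √((ρ - ‖inversion b R x‖) * (ρ - ‖inversion b R y‖)) ≤
      (1 + ρ / ‖b‖) * (dist x y / √((ρ - ‖x‖) * (ρ - ‖y‖))) := by
  have hx'_pos : 0 < ρ - ‖inversion b R x‖ := sub_pos.2 (norm_inversion_lt hb hR hx)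
  have hy'_pos : 0 < ρ - ‖inversion b R y‖ := sub_pos.2 (norm_inversion_lt hb hR hy)
  have hρ : 0 < ρ := (norm_nonneg x).trans_lt hx
  have hfactor : R ^ 2 / (dist x b * dist y b) * √((ρ - ‖x‖) * (ρ - ‖y‖)) ≤
      (1 + ρ / ‖b‖) * √((ρ - ‖inversion b R x‖) * (ρ - ‖inversion b R y‖)) := by
    refine le_of_sq_le_sq ?_ (by positivity)
    calc (R ^ 2 / (dist x b * dist y b) * √((ρ - ‖x‖) * (ρ - ‖y‖))) ^ 2
        = ((R / dist x b) ^ 2 * (ρ - ‖x‖)) * ((R / dist y b) ^ 2 * (ρ - ‖y‖)) := by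
          rw [mul_pow, Real.sq_sqrt (by positivity)]
          ring
      _ ≤ ((1 + ρ / ‖b‖) * (ρ - ‖inversion b R x‖)) *
          ((1 + ρ / ‖b‖) * (ρ - ‖inversion b R y‖)) :=
          mul_le_mul (div_dist_sq_mul_sub_norm_le hb hR hx)
            (div_dist_sq_mul_sub_norm_le hb hR hy) (by positivity) (by positivity)
      _ = ((1 + ρ / ‖b‖) * √((ρ - ‖inversion b R x‖) * (ρ - ‖inversion b R y‖))) ^ 2 := by
          rw [mul_pow, Real.sq_sqrt (by positivity)]
          ring
  rw [dist_inversion_inversion (ne_of_norm_sq_eq_of_norm_lt hb hx)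
    (ne_of_norm_sq_eq_of_norm_lt hb hy), ← mul_div_assoc,
    div_le_div_iff₀ (by positivity) (by positivity)]
  linear_combination dist x y * hfactor

/-- The hyperbolic-type metric `h_{𝔹,c}` on the unit ball `𝔹` of an arbitrary normed space; `hB` is
the case of `ℝⁿ`. -/
def unitBallH (c : ℝ) (x y : E) : ℝ :=
  Real.log (1 + c * ‖x - y‖ / √((1 - ‖x‖) * (1 - ‖y‖)))

/-- The inversion `σ_a` of an inner product space in the sphere with center `a* = a / ‖a‖ ^ 2` that
is orthogonal to the unit sphere. It is meant for `0 < ‖a‖ < 1`; for every other `a` the radius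
degenerates to `0`. -/
def unitBallInversion (a : E) : E → E :=
  inversion ((‖a‖ ^ 2)⁻¹ • a) √((‖a‖ ^ 2)⁻¹ - 1)

theorem hB_sigmaInv_upper_bound_general (ha_lt : ‖a‖ < 1) (ha : a ≠ 0) (hc : 0 ≤ c)
    (hx : ‖x‖ < 1) (hy : ‖y‖ < 1) :
    unitBallH c (unitBallInversion a x) (unitBallInversion a y) ≤
      Real.log (1 + c * (1 + ‖a‖) * ‖x - y‖ / √((1 - ‖x‖) * (1 - ‖y‖))) := by
  have ha_pos : 0 < ‖a‖ := norm_pos_iff.2 ha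
  have hradius : 0 < (‖a‖ ^ 2)⁻¹ - 1 :=
    sub_pos.2 ((one_lt_inv₀ (by positivity)).2 (pow_lt_one₀ ha_pos.le ha_lt two_ne_zero))
  have hcenter : ‖(‖a‖ ^ 2)⁻¹ • a‖ = ‖a‖⁻¹ := by
    rw [norm_smul, norm_inv, norm_pow, norm_norm]
    field_simp
  have hortho : ‖(‖a‖ ^ 2)⁻¹ • a‖ ^ 2 = 1 ^ 2 + √((‖a‖ ^ 2)⁻¹ - 1) ^ 2 := by
    rw [hcenter, Real.sq_sqrt hradius.le]
    ring
  have hratio := dist_inversion_div_sqrt_le hortho (Real.sqrt_pos.2 hradius).ne' hx hy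
  rw [hcenter, one_div, inv_inv, dist_eq_norm, dist_eq_norm] at hratio
  refine Real.log_le_log (by positivity) ?_
  rw [mul_div_assoc, mul_assoc, mul_div_assoc, mul_div_assoc]
  gcongr
  exact hratio

end Inversion

lemma sigmaInv_eq_unitBallInversion {n : ℕ} {a : EuclideanSpace ℝ (Fin n)} (ha_le : ‖a‖ ≤ 1)
    (ha : a ≠ 0) : sigmaInv a = unitBallInversion a := by
  have hradius : 0 ≤ (‖a‖ ^ 2)⁻¹ - 1 :=
    sub_nonneg.2 ((one_le_inv₀ (by positivity)).2 (pow_le_one₀ (norm_nonneg a) ha_le))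
  ext1 x
  rw [sigmaInv, unitBallInversion, EuclideanGeometry.inversion, vsub_eq_sub, vadd_eq_add,
    dist_eq_norm, div_pow, Real.sq_sqrt hradius, add_comm]

theorem hB_sigmaInv_upper_bound (n : ℕ) (hn : 2 ≤ n)
    (a : EuclideanSpace ℝ (Fin n)) (haB : ‖a‖ < 1) (ha0 : a ≠ 0)
    (c : ℝ) (hc : 0 < c)
    (x y : EuclideanSpace ℝ (Fin n)) (hx : ‖x‖ < 1) (hy : ‖y‖ < 1) :
    hB c (sigmaInv a x) (sigmaInv a y) ≤
      Real.log (1 + c * (1 + ‖a‖) * ‖x - y‖ / Real.sqrt ((1 - ‖x‖) * (1 - ‖y‖))) := by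
  rw [sigmaInv_eq_unitBallInversion haB.le ha0]
  exact hB_sigmaInv_upper_bound_general haB ha0 hc.le hx hy
end
end

section
/- Let n ≥ 2, a ∈ 𝔹ⁿ \ {0}, c > 0, and a* = a/|a|². Then for all x, y ∈ 𝔹ⁿ \ {0}: log(1 + c·|x − y|/(|a|·√(|x|·|y|·|x − a*|·|y − a*|))) ≤ (2/(2 − |a|))·h_{𝔹ⁿ\{0},c}(x, y). -/
noncomputable section

open Real Filter

/-!
By the triangle inequality `|a| |x - a*| ≥ 1 - |a| |x|`, so everything reduces to one inequality
for the radius `r = |x|`, namely `min r (1 - r) ≤ (2 / (2 - |a|)) r (1 - |a| r)`, with equality at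
`r = 1/2`. Taking the geometric mean over `x` and `y` compares the two denominators up to the factor
`2 / (2 - |a|) ≥ 1`, and Bernoulli's inequality pulls this factor out of the logarithm.
-/

lemma log_one_add_mul_le_mul_log_one_add {k u : ℝ} (hk : 1 ≤ k) (hku : 0 < 1 + k * u) :
    Real.log (1 + k * u) ≤ k * Real.log (1 + u) := by
  have hu : 0 < 1 + u := by
    by_contra! h
    nlinarith
  calc Real.log (1 + k * u) ≤ Real.log ((1 + u) ^ k) :=
        Real.log_le_log hku (one_add_mul_self_le_rpow_one_add (by linarith) hk)
    _ = k * Real.log (1 + u) := Real.log_rpow hu k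

lemma log_one_add_div_le_mul_log_one_add_div {k u s t : ℝ} (hk : 1 ≤ k) (hu : 0 ≤ u) (hs : 0 < s)
    (hst : s ≤ k * t) : Real.log (1 + u / t) ≤ k * Real.log (1 + u / s) := by
  have hk₀ : 0 < k := zero_lt_one.trans_le hk
  have ht : 0 < t := pos_of_mul_pos_right (hs.trans_le hst) hk₀.le
  have hle : u / t ≤ k * (u / s) :=
    calc u / t = k * (u / (k * t)) := by field_simp
      _ ≤ k * (u / s) := by gcongr
  calc Real.log (1 + u / t) ≤ Real.log (1 + k * (u / s)) := by gcongr
    _ ≤ k * Real.log (1 + u / s) := log_one_add_mul_le_mul_log_one_add hk (by positivity)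

lemma min_self_one_sub_le {t r : ℝ} (ht₀ : 0 ≤ t) (ht₁ : t ≤ 1) (hr₀ : 0 ≤ r) (hr₁ : r ≤ 1) :
    min r (1 - r) ≤ 2 / (2 - t) * (r * (1 - t * r)) := by
  have ht : 0 < 2 - t := by linarith
  rw [div_mul_eq_mul_div, le_div_iff₀ ht]
  rcases le_total r (1 / 2) with hr | hr
  · have hgap : 0 ≤ t * r * (1 - 2 * r) := mul_nonneg (mul_nonneg ht₀ hr₀) (by linarith)
    calc min r (1 - r) * (2 - t) ≤ r * (2 - t) := by gcongr; exact min_le_left _ _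
      _ ≤ 2 * (r * (1 - t * r)) := by linarith
  · have hgap : 0 ≤ (2 * r - 1) * (2 - t * (1 + r)) :=
      mul_nonneg (by linarith) (by nlinarith)
    calc min r (1 - r) * (2 - t) ≤ (1 - r) * (2 - t) := by gcongr; exact min_le_right _ _
      _ ≤ 2 * (r * (1 - t * r)) := by linarith

section NormedSpace

variable {E : Type*} [NormedAddCommGroup E] [NormedSpace ℝ E] {a x y : E}

lemma one_sub_norm_mul_norm_le (ha : a ≠ 0) (x : E) :
    1 - ‖a‖ * ‖x‖ ≤ ‖a‖ * ‖x - (‖a‖ ^ 2)⁻¹ • a‖ := by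
  have hinv : ‖a‖ * ‖(‖a‖ ^ 2)⁻¹ • a‖ = 1 := by
    have : ‖a‖ ≠ 0 := norm_ne_zero_iff.2 ha
    rw [norm_smul, norm_inv, norm_pow, norm_norm]
    field_simp
  calc 1 - ‖a‖ * ‖x‖ = ‖a‖ * (‖(‖a‖ ^ 2)⁻¹ • a‖ - ‖x‖) := by rw [mul_sub, hinv]
    _ ≤ ‖a‖ * ‖x - (‖a‖ ^ 2)⁻¹ • a‖ := by
      rw [norm_sub_rev x]
      gcongr
      exact norm_sub_norm_le _ _

lemma min_norm_one_sub_norm_le (ha : a ≠ 0) (ha₁ : ‖a‖ ≤ 1) (hx : ‖x‖ ≤ 1) :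
    min ‖x‖ (1 - ‖x‖) ≤ 2 / (2 - ‖a‖) * (‖x‖ * (‖a‖ * ‖x - (‖a‖ ^ 2)⁻¹ • a‖)) := by
  have hk : 0 < 2 - ‖a‖ := by linarith
  calc min ‖x‖ (1 - ‖x‖) ≤ 2 / (2 - ‖a‖) * (‖x‖ * (1 - ‖a‖ * ‖x‖)) :=
        min_self_one_sub_le (norm_nonneg a) ha₁ (norm_nonneg x) hx
    _ ≤ 2 / (2 - ‖a‖) * (‖x‖ * (‖a‖ * ‖x - (‖a‖ ^ 2)⁻¹ • a‖)) := by
      gcongr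
      exact one_sub_norm_mul_norm_le ha x

lemma sqrt_min_mul_min_le (ha : a ≠ 0) (ha₁ : ‖a‖ ≤ 1) (hx : ‖x‖ ≤ 1) (hy : ‖y‖ ≤ 1) :
    √(min ‖x‖ (1 - ‖x‖) * min ‖y‖ (1 - ‖y‖)) ≤
      2 / (2 - ‖a‖) *
        (‖a‖ * √(‖x‖ * ‖y‖ * ‖x - (‖a‖ ^ 2)⁻¹ • a‖ * ‖y - (‖a‖ ^ 2)⁻¹ • a‖)) := by
  have hk : 0 < 2 - ‖a‖ := by linarith
  have hy_min : 0 ≤ min ‖y‖ (1 - ‖y‖) := le_min (norm_nonneg y) (by linarith)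
  refine Real.sqrt_le_iff.2 ⟨by positivity, ?_⟩
  rw [mul_pow, mul_pow, Real.sq_sqrt (by positivity)]
  calc min ‖x‖ (1 - ‖x‖) * min ‖y‖ (1 - ‖y‖)
      ≤ 2 / (2 - ‖a‖) * (‖x‖ * (‖a‖ * ‖x - (‖a‖ ^ 2)⁻¹ • a‖)) *
          (2 / (2 - ‖a‖) * (‖y‖ * (‖a‖ * ‖y - (‖a‖ ^ 2)⁻¹ • a‖))) :=
        mul_le_mul (min_norm_one_sub_norm_le ha ha₁ hx) (min_norm_one_sub_norm_le ha ha₁ hy)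
          hy_min (by positivity)
    _ = _ := by ring

theorem punctured_case_one_bound_general (ha : a ≠ 0) (ha₁ : ‖a‖ ≤ 1) {c : ℝ} (hc : 0 ≤ c)
    (hx₀ : x ≠ 0) (hx : ‖x‖ < 1) (hy₀ : y ≠ 0) (hy : ‖y‖ < 1) :
    Real.log (1 + c * ‖x - y‖ /
        (‖a‖ * √(‖x‖ * ‖y‖ * ‖x - (‖a‖ ^ 2)⁻¹ • a‖ * ‖y - (‖a‖ ^ 2)⁻¹ • a‖))) ≤
      2 / (2 - ‖a‖) *
        Real.log (1 + c * ‖x - y‖ / √(min ‖x‖ (1 - ‖x‖) * min ‖y‖ (1 - ‖y‖))) := by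
  have hk : 1 ≤ 2 / (2 - ‖a‖) := by
    rw [one_le_div (by linarith)]
    linarith [norm_nonneg a]
  have hx_min : 0 < min ‖x‖ (1 - ‖x‖) := lt_min (norm_pos_iff.2 hx₀) (sub_pos.2 hx)
  have hy_min : 0 < min ‖y‖ (1 - ‖y‖) := lt_min (norm_pos_iff.2 hy₀) (sub_pos.2 hy)
  exact log_one_add_div_le_mul_log_one_add_div hk (by positivity)
    (Real.sqrt_pos.2 (mul_pos hx_min hy_min)) (sqrt_min_mul_min_le ha ha₁ hx.le hy.le)

end NormedSpace

theorem punctured_case_one_bound (n : ℕ) (hn : 2 ≤ n)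
    (a : EuclideanSpace ℝ (Fin n)) (haB : ‖a‖ < 1) (ha0 : a ≠ 0)
    (c : ℝ) (hc : 0 < c)
    (x y : EuclideanSpace ℝ (Fin n))
    (hx : ‖x‖ < 1) (hx0 : x ≠ 0) (hy : ‖y‖ < 1) (hy0 : y ≠ 0) :
    Real.log (1 + c * ‖x - y‖ /
        (‖a‖ * Real.sqrt (‖x‖ * ‖y‖ * ‖x - (‖a‖ ^ 2)⁻¹ • a‖ * ‖y - (‖a‖ ^ 2)⁻¹ • a‖))) ≤
      (2 / (2 - ‖a‖)) * hP c 0 x y := by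
  simpa only [hP, sub_zero] using
    punctured_case_one_bound_general ha0 haB.le hc.le hx0 hx hy0 hy
end
end
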